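/- Let ρ be a density matrix with entropy E and spectral constants α and β as in the context, and assume α > 0. Then there exist constants δ < 1, C > 0 and n₀ ∈ ℕ such that for all n ≥ n₀, 𝒮(ρ^{⊗n}, δ) > C · 2^{nE + α√n}. -/

import Mathlib

open scoped BigOperators Classical ComplexOrder

/-- A density matrix: positive semidefinite with trace one. -/
def IsDensity {ι : Type*} [Fintype ι] [DecidableEq ι] (ρ : Matrix ι ι ℂ) : Prop :=
  ρ.PosSemidef ∧ ρ.trace = 1

/-- The trace distance `D(ρ,σ) = Tr|ρ−σ|`: the sum of the absolute values of the
eigenvalues of the Hermitian matrix `ρ − σ` (no factor 1/2). -/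
noncomputable def traceDist {ι : Type*} [Fintype ι] [DecidableEq ι]
    (ρ σ : Matrix ι ι ℂ) : ℝ :=
  if h : (ρ - σ).IsHermitian then ∑ i, |h.eigenvalues i| else 0

/-- The minimal dimension `𝒮(ρ,δ)` of a `δ`-significant subspace: the minimum rank of an
orthogonal projection `P` (`P = Pᴴ = P²`) with `Tr(Pρ) ≥ δ`. -/
noncomputable def sigDim {ι : Type*} [Fintype ι] [DecidableEq ι]
    (ρ : Matrix ι ι ℂ) (δ : ℝ) : ℕ :=
  sInf {m : ℕ | ∃ P : Matrix ι ι ℂ,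
    P.IsHermitian ∧ P * P = P ∧ δ ≤ ((P * ρ).trace).re ∧ P.rank = m}

/-- The `n`-fold Kronecker power of `ρ`, indexed by `Fin n → ι`. -/
noncomputable def kronPow {ι : Type*} (ρ : Matrix ι ι ℂ) (n : ℕ) :
    Matrix (Fin n → ι) (Fin n → ι) ℂ :=
  Matrix.of fun i j => ∏ k, ρ (i k) (j k)

/-- The rank-one matrix `|u⟩⟨u|`. -/
noncomputable def outer {ι : Type*} (u : ι → ℂ) : Matrix ι ι ℂ :=
  Matrix.of fun i j => u i * starRingEnd ℂ (u j)

/-- The partial trace over the second subsystem. -/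
noncomputable def ptraceB {A B : Type*} [Fintype B]
    (M : Matrix (A × B) (A × B) ℂ) : Matrix A A ℂ :=
  Matrix.of fun a a' => ∑ b, M (a, b) (a', b)

open MeasureTheory ProbabilityTheory Filter Topology

/-- The `n`-fold product of a finite probability distribution `p` gives the event
`a √n < ∑ f (x k)` probability bounded away from zero, provided `f` is centred and has positive
variance under `p`. -/
theorem exists_pos_le_sum_prod_of_sqrt_lt_sum {ι : Type*} [Fintype ι] (p f : ι → ℝ)
    (hp : ∀ i, 0 ≤ p i) (hp1 : ∑ i, p i = 1) (hf : ∑ i, p i * f i = 0)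
    (hv : 0 < ∑ i, p i * f i ^ 2) (a : ℝ) :
    ∃ c : ℝ, 0 < c ∧ ∀ᶠ n : ℕ in atTop,
      c ≤ ∑ x : Fin n → ι with a * √n < ∑ k, f (x k), ∏ k, p (x k) := by
  let _ : MeasurableSpace ι := ⊤
  have : MeasurableSingletonClass ι := ⟨fun _ => trivial⟩
  let q : PMF ι := PMF.ofFintype (fun i => ENNReal.ofReal (p i)) (by
    rw [← ENNReal.ofReal_sum_of_nonneg fun i _ => hp i, hp1, ENNReal.ofReal_one])
  have hq : ∀ i, q.toMeasure.real {i} = p i := fun i => by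
    rw [measureReal_def, PMF.toMeasure_apply_singleton _ _ (measurableSet_singleton i)]
    exact ENNReal.toReal_ofReal (hp i)
  obtain ⟨Ω, _, P, Y, hYm, hYlaw, hind, hP⟩ := exists_iid ℕ q.toMeasure
  have hfm : Measurable f := measurable_of_countable f
  set X : ℕ → Ω → ℝ := fun i => f ∘ Y i with hX
  have hXm : ∀ i, Measurable (X i) := fun i => hfm.comp (hYm i)
  have hXind : iIndepFun X P := hind.comp (fun _ => f) fun _ => hfm
  have hYid : ∀ i, IdentDistrib (Y i) (Y 0) P P := fun i =>
    ⟨(hYm i).aemeasurable, (hYm 0).aemeasurable, by rw [(hYlaw i).map_eq, (hYlaw 0).map_eq]⟩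
  have hXid : ∀ i, IdentDistrib (X i) (X 0) P P := fun i => (hYid i).comp hfm
  have hint : ∀ g : ι → ℝ, ∫ ω, g (Y 0 ω) ∂P = ∑ i, p i * g i := fun g => by
    rw [← integral_map (hYm 0).aemeasurable (measurable_of_countable g).aestronglyMeasurable,
      (hYlaw 0).map_eq, integral_fintype (Integrable.of_finite)]
    simp [hq]
  have hmean : ∫ ω, X 0 ω ∂P = 0 := (hint f).trans hf
  have hvar : Var[X 0; P] = ∑ i, p i * f i ^ 2 := by
    rw [variance_of_integral_eq_zero (hXm 0).aemeasurable hmean]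
    exact hint fun i => f i ^ 2
  have hmem : MemLp (X 0) 2 P := by
    refine memLp_two_of_variance_ne_zero (hXm 0).aestronglyMeasurable ?_
    rw [hvar]; exact hv.ne'
  have hclt := (tendstoInDistribution_inv_sqrt_mul_sum_sub
    (HasLaw.id (μ := gaussianReal 0 Var[X 0; P].toNNReal)) hmem hXind hXid).tendsto
  have hopen := ProbabilityMeasure.le_liminf_measure_open_of_tendsto hclt (isOpen_Ioi (a := a))
  have hgpos : 0 < gaussianReal 0 Var[X 0; P].toNNReal (Set.Ioi a) := by
    have hne : Var[X 0; P].toNNReal ≠ 0 := by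
      rw [hvar]; simpa using hv
    refine pos_iff_ne_zero.2 fun h => ?_
    have := gaussianReal_absolutelyContinuous' 0 hne h
    simp at this
  obtain ⟨c, hc0, hc⟩ := ENNReal.lt_iff_exists_nnreal_btwn.1 hgpos
  have hev := eventually_lt_of_lt_liminf (hc.trans_le (by simpa using hopen))
  refine ⟨c, by exact_mod_cast hc0, ?_⟩
  filter_upwards [hev, eventually_gt_atTop 0] with n hn hnpos
  have hsq : 0 < √(n : ℝ) := Real.sqrt_pos.2 (by exact_mod_cast hnpos)
  let Z : Ω → Fin n → ι := fun ω k => Y k ω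
  have hZm : Measurable Z := measurable_pi_lambda _ fun k => hYm k
  have hZlaw : P.map Z = Measure.pi fun _ : Fin n => q.toMeasure := by
    have h := (iIndepFun_iff_map_fun_eq_pi_map (f := fun k : Fin n => Y k)
      fun k => (hYm k).aemeasurable).1 (hind.precomp Fin.val_injective)
    simpa only [(hYlaw _).map_eq] using h
  rw [Measure.map_apply (by fun_prop) measurableSet_Ioi] at hn
  have hset : (fun ω => (√(n : ℝ))⁻¹ * (∑ k ∈ Finset.range n, X k ω - n * ∫ ω, X 0 ω ∂P)) ⁻¹'
      Set.Ioi a = Z ⁻¹' ↑({x : Fin n → ι | a * √n < ∑ k, f (x k)} : Finset (Fin n → ι)) := by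
    ext ω
    simp only [hmean]
    simp [Z, hX, Finset.sum_range, inv_mul_eq_div, lt_div_iff₀ hsq]
  rw [hset, ← Measure.map_apply hZm (Finset.measurableSet _), hZlaw] at hn
  have hprod : ∀ x : Fin n → ι, (Measure.pi fun _ : Fin n => q.toMeasure).real {x} =
      ∏ k, p (x k) := fun x => by
    simp [measureReal_def, Measure.pi_singleton, ← hq]
  simp_rw [← hprod]
  rw [sum_measureReal_singleton, measureReal_def]
  have := (ENNReal.toReal_lt_toReal ENNReal.coe_ne_top (measure_ne_top _ _)).2 hn
  simpa using this.le

namespace Matrix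

theorem IsHermitian.re_trace_le_rank {m : Type*} [Fintype m] [DecidableEq m]
    {P : Matrix m m ℂ} (hP : P.IsHermitian) (hPP : P * P = P) : P.trace.re ≤ P.rank := by
  have h01 : ∀ i, hP.eigenvalues i = 0 ∨ hP.eigenvalues i = 1 := fun i => by
    have h := hP.mulVec_eigenvectorBasis i
    set v := (hP.eigenvectorBasis i).ofLp with hv
    have hv0 : v ≠ 0 := by
      have := hP.eigenvectorBasis.orthonormal.ne_zero i
      simpa [hv] using this
    have h2 : hP.eigenvalues i • hP.eigenvalues i • v = hP.eigenvalues i • v := by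
      rw [← h, ← mulVec_smul, ← h, mulVec_mulVec, hPP]
    rw [← sub_eq_zero, smul_smul, ← sub_smul, smul_eq_zero, or_iff_left hv0] at h2
    have : hP.eigenvalues i * (hP.eigenvalues i - 1) = 0 := by linarith
    simpa [sub_eq_zero] using this
  rw [hP.trace_eq_sum_eigenvalues, hP.rank_eq_card_non_zero_eigs, Fintype.card_subtype,
    Finset.card_filter]
  simp only [Complex.coe_algebraMap, Complex.re_sum]
  push_cast
  refine Finset.sum_le_sum fun i _ => ?_
  rcases h01 i with h | h <;> simp [h]

theorem IsHermitian.re_diag_mem_Icc {m : Type*} [Fintype m] {P : Matrix m m ℂ}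
    (hP : P.IsHermitian) (hPP : P * P = P) (i : m) : (P i i).re ∈ Set.Icc (0 : ℝ) 1 := by
  have h : (P i i).re = ∑ j, Complex.normSq (P i j) := by
    conv_lhs => rw [← hPP, mul_apply, Complex.re_sum]
    refine Finset.sum_congr rfl fun j _ => ?_
    rw [← hP.apply j i, Complex.star_def, Complex.mul_conj, Complex.ofReal_re]
  have h0 : 0 ≤ (P i i).re := h ▸ Finset.sum_nonneg fun j _ => Complex.normSq_nonneg _
  have h1 : (P i i).re * (P i i).re ≤ (P i i).re := by
    conv_rhs => rw [h]
    refine le_trans ?_ (Finset.single_le_sum (fun j _ => Complex.normSq_nonneg (P i j))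
      (Finset.mem_univ i))
    rw [Complex.normSq_apply]
    nlinarith [mul_self_nonneg (P i i).im]
  exact ⟨h0, by nlinarith⟩

end Matrix

theorem kronPow_mul {ι : Type*} [Fintype ι] (A B : Matrix ι ι ℂ) (n : ℕ) :
    kronPow (A * B) n = kronPow A n * kronPow B n := by
  ext i j
  simp only [kronPow, Matrix.of_apply, Matrix.mul_apply, Fintype.prod_sum,
    ← Finset.prod_mul_distrib]

theorem kronPow_conjTranspose {ι : Type*} (A : Matrix ι ι ℂ) (n : ℕ) :
    (kronPow A n).conjTranspose = kronPow A.conjTranspose n := by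
  ext i j
  simp [kronPow, Matrix.conjTranspose_apply]

theorem kronPow_diagonal {ι : Type*} [DecidableEq ι] (d : ι → ℂ) (n : ℕ) :
    kronPow (Matrix.diagonal d) n = Matrix.diagonal fun x : Fin n → ι => ∏ k, d (x k) := by
  ext i j
  rcases eq_or_ne i j with rfl | h
  · simp [kronPow]
  · obtain ⟨k, hk⟩ := Function.ne_iff.1 h
    rw [Matrix.diagonal_apply_ne _ h]
    exact Finset.prod_eq_zero (Finset.mem_univ k) (Matrix.diagonal_apply_ne _ hk)

theorem kronPow_one {ι : Type*} [DecidableEq ι] (n : ℕ) :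
    kronPow (1 : Matrix ι ι ℂ) n = 1 := by
  rw [← Matrix.diagonal_one, kronPow_diagonal]
  simp

/-- If `σ = V diag(d) V†` with `V` unitary, `d` a probability distribution, and `d ≤ l` on a set
`T`, then a projection capturing weight `δ` of `σ` has rank at least
`(δ - d(Tᶜ)) / l`. -/
theorem le_sigDim_mul_of_unitary_diagonal {m : Type*} [Fintype m] [DecidableEq m]
    (V : Matrix m m ℂ) (hV : V * V.conjTranspose = 1) (d : m → ℝ)
    (hd : ∀ x, 0 ≤ d x) (hd1 : ∑ x, d x = 1) (T : Finset m) (l : ℝ) (hl : 0 ≤ l)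
    (hT : ∀ x ∈ T, d x ≤ l) (δ : ℝ) (hδ : δ ≤ 1) :
    δ - (1 - ∑ x ∈ T, d x) ≤
      sigDim (V * Matrix.diagonal (fun x => (d x : ℂ)) * V.conjTranspose) δ * l := by
  set σ := V * Matrix.diagonal (fun x => (d x : ℂ)) * V.conjTranspose with hσ
  have hV' : V.conjTranspose * V = 1 := mul_eq_one_comm.1 hV
  have hne : {k : ℕ | ∃ P : Matrix m m ℂ,
      P.IsHermitian ∧ P * P = P ∧ δ ≤ ((P * σ).trace).re ∧ P.rank = k}.Nonempty := by
    refine ⟨_, 1, Matrix.isHermitian_one, one_mul 1, ?_, rfl⟩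
    rw [one_mul, hσ, Matrix.trace_mul_comm, ← mul_assoc, hV', one_mul, Matrix.trace_diagonal,
      ← Complex.ofReal_sum, hd1]
    simpa using hδ
  obtain ⟨P, hP, hPP, hPδ, hrank⟩ := Nat.sInf_mem hne
  change P.rank = sigDim σ δ at hrank
  rw [← hrank]
  set Q := V.conjTranspose * P * V with hQ
  have hQh : Q.IsHermitian := Matrix.isHermitian_conjTranspose_mul_mul V hP
  have hQQ : Q * Q = Q := by
    calc Q * Q = V.conjTranspose * P * (V * V.conjTranspose) * P * V := by
          simp only [hQ, mul_assoc]
      _ = V.conjTranspose * (P * P) * V := by rw [hV, mul_one]; simp only [mul_assoc]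
      _ = Q := by rw [hPP]
  have hQtr : ∑ x, (Q x x).re ≤ P.rank := by
    have : Q.trace = P.trace := by
      rw [hQ, Matrix.trace_mul_comm, ← mul_assoc, hV, one_mul]
    refine le_trans (le_of_eq ?_) (hP.re_trace_le_rank hPP)
    rw [← this, Matrix.trace, Complex.re_sum]
    rfl
  have htr : ((P * σ).trace).re = ∑ x, (Q x x).re * d x := by
    have : (P * σ).trace = (Q * Matrix.diagonal fun x => (d x : ℂ)).trace := by
      rw [hσ, ← mul_assoc, Matrix.trace_mul_comm, hQ]
      simp only [mul_assoc]
    rw [this, Matrix.trace, Complex.re_sum]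
    refine Finset.sum_congr rfl fun x _ => ?_
    rw [Matrix.diag_apply, Matrix.mul_diagonal, Complex.re_mul_ofReal]
  have hQ01 := fun x => hQh.re_diag_mem_Icc hQQ x
  have h1 : ∑ x ∈ T, (Q x x).re * d x ≤ P.rank * l :=
    calc ∑ x ∈ T, (Q x x).re * d x ≤ ∑ x ∈ T, (Q x x).re * l :=
          Finset.sum_le_sum fun x hx => mul_le_mul_of_nonneg_left (hT x hx) (hQ01 x).1
      _ ≤ ∑ x, (Q x x).re * l :=
          Finset.sum_le_univ_sum_of_nonneg fun x => mul_nonneg (hQ01 x).1 hl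
      _ ≤ P.rank * l := by
          rw [← Finset.sum_mul]
          exact mul_le_mul_of_nonneg_right hQtr hl
  have h2 : ∑ x ∈ Tᶜ, (Q x x).re * d x ≤ ∑ x ∈ Tᶜ, d x :=
    Finset.sum_le_sum fun x _ => mul_le_of_le_one_left (hd x) (hQ01 x).2
  have h3 := Finset.sum_add_sum_compl T fun x => (Q x x).re * d x
  have h4 := Finset.sum_add_sum_compl T d
  linarith

/-- for a density matrix `ρ` with entropy `E` and spectral deviation `α > 0`,
there exist `δ < 1`, `C > 0` and `n₀` such that for all `n ≥ n₀`,
`𝒮(ρ^{⊗n}, δ) > C · 2^{nE + α√n}`. -/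
theorem sigDim_kronPow_lower_bound {ι : Type*} [Fintype ι] [DecidableEq ι] [Nonempty ι]
    (ρ : Matrix ι ι ℂ) (hρ : IsDensity ρ)
    (E α β : ℝ)
    (hE : E = -∑ i, hρ.1.isHermitian.eigenvalues i *
        Real.logb 2 (hρ.1.isHermitian.eigenvalues i))
    (hα : α = Real.sqrt (∑ i, hρ.1.isHermitian.eigenvalues i *
        (Real.logb 2 (hρ.1.isHermitian.eigenvalues i) + E) ^ 2))
    (hβ : β = ∑ i, hρ.1.isHermitian.eigenvalues i *
        |Real.logb 2 (hρ.1.isHermitian.eigenvalues i) + E| ^ 3)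
    (hαpos : 0 < α) :
    ∃ δ C : ℝ, ∃ n₀ : ℕ, δ < 1 ∧ 0 < C ∧
      ∀ n : ℕ, n₀ ≤ n →
        C * (2 : ℝ) ^ ((n : ℝ) * E + α * Real.sqrt n) < (sigDim (kronPow ρ n) δ : ℝ) := by
  classical
  set p := hρ.1.isHermitian.eigenvalues with hp_def
  have hp : ∀ i, 0 ≤ p i := hρ.1.eigenvalues_nonneg
  have hp1 : ∑ i, p i = 1 := by
    have h := hρ.2.symm.trans hρ.1.isHermitian.trace_eq_sum_eigenvalues
    simp only [Complex.coe_algebraMap, ← Complex.ofReal_sum] at h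
    exact_mod_cast h.symm
  have hmean : ∑ i, p i * (-(Real.logb 2 (p i) + E)) = 0 := by
    simp only [mul_neg, mul_add, Finset.sum_neg_distrib, Finset.sum_add_distrib,
      ← Finset.sum_mul, hp1]
    linarith
  have hvar : 0 < ∑ i, p i * (-(Real.logb 2 (p i) + E)) ^ 2 := by
    simp only [neg_sq]
    exact Real.sqrt_pos.1 (hα ▸ hαpos)
  obtain ⟨c, hc, hev⟩ := exists_pos_le_sum_prod_of_sqrt_lt_sum p _ hp hp1 hmean hvar α
  obtain ⟨n₀, hn₀⟩ := eventually_atTop.1 hev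
  refine ⟨1 - c / 2, c / 4, n₀, by linarith, by linarith, fun n hn => ?_⟩
  set t : ℝ := n * E + α * √n with ht
  have hprod1 : ∑ x : Fin n → ι, ∏ k, p (x k) = 1 := by
    rw [← Fintype.prod_sum]
    simp [hp1]
  obtain ⟨V, hV, hVρ⟩ : ∃ V : Matrix (Fin n → ι) (Fin n → ι) ℂ, V * V.conjTranspose = 1 ∧
      kronPow ρ n =
        V * Matrix.diagonal (fun x => ((∏ k, p (x k) : ℝ) : ℂ)) * V.conjTranspose := by
    set U := hρ.1.isHermitian.eigenvectorUnitary with hU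
    refine ⟨kronPow U n, ?_, ?_⟩
    · rw [kronPow_conjTranspose, ← kronPow_mul, ← Matrix.star_eq_conjTranspose,
        Unitary.mul_star_self_of_mem U.2, kronPow_one]
    · have h := hρ.1.isHermitian.spectral_theorem
      rw [Unitary.conjStarAlgAut_apply] at h
      conv_lhs => rw [h, kronPow_mul, kronPow_mul, kronPow_diagonal]
      rw [kronPow_conjTranspose]
      simp [hp_def, hU, Matrix.star_eq_conjTranspose]
  have hsmall : ∀ x ∈ ({x : Fin n → ι | α * √n < ∑ k, -(Real.logb 2 (p (x k)) + E)} :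
      Finset (Fin n → ι)), ∏ k, p (x k) ≤ (2 : ℝ) ^ (-t) := by
    intro x hx
    rw [Finset.mem_filter] at hx
    by_cases hzero : ∃ k, p (x k) = 0
    · obtain ⟨k, hk⟩ := hzero
      rw [Finset.prod_eq_zero (Finset.mem_univ k) hk]
      positivity
    · push Not at hzero
      have hpos : 0 < ∏ k, p (x k) :=
        Finset.prod_pos fun k _ => (hp _).lt_of_ne (hzero k).symm
      rw [← Real.logb_le_iff_le_rpow one_lt_two hpos, Real.logb_prod _ _ fun k _ => hzero k]
      have h := hx.2
      simp only [Finset.sum_neg_distrib, Finset.sum_add_distrib, Finset.sum_const,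
        Finset.card_univ, Fintype.card_fin, nsmul_eq_mul] at h
      linarith
  have hmain := le_sigDim_mul_of_unitary_diagonal V hV (fun x => ∏ k, p (x k))
    (fun x => Finset.prod_nonneg fun k _ => hp _) hprod1 _ _ (by positivity) hsmall
    (1 - c / 2) (by linarith)
  rw [← hVρ] at hmain
  have htail := hn₀ n hn
  have hhalf : c / 4 < sigDim (kronPow ρ n) (1 - c / 2) * (2 : ℝ) ^ (-t) := by
    linarith
  rwa [Real.rpow_neg zero_le_two, ← div_eq_mul_inv, lt_div_iff₀ (by positivity)] at hhalf
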